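/- Define f(x) := Σ_{n=0}^∞ q^{n(n−1)/2}·x^n/n!, an entire function. Then: (a) f is the unique entire function satisfying f′(x) = f(qx) for all x ∈ ℂ and f(0) = 1; (b) for every x ∈ ℂ ∖ (−∞,0] and every ε > 0, the two integrals below converge absolutely and f(x) = (1/(2πi))·[ ∫_{−∞}^{∞} q^{(t−iε)(t−iε+1)/2}·Γ(t−iε)·exp(−(t−iε)·(Log x − πi)) dt − ∫_{−∞}^{∞} q^{(t+iε)(t+iε+1)/2}·Γ(t+iε)·exp(−(t+iε)·(Log x − πi)) dt ]. -/

import Mathlib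

/-!
The series is differentiated term by term on discs, where it is dominated by the exponential
series; conversely an entire solution of `g'(x) = g(qx)` satisfies
`g⁽ⁿ⁾(x) = q^{n(n-1)/2} g(qⁿx)`, so its Taylor series at `0` is forced (`fqb_unique`).

For the integral formula put `a = Log x - πi`, so that `e^a = -x`, and
`h(s) = q^{s(s+1)/2} Γ(s) e^{-sa}` (`mb`). Its only singularities are simple poles at the `-n`, and
the residue there is exactly the `n`-th term of the series (`mb_simple_pole`). Hence the
counterclockwise integral of `h` along the boundary of `[-N - 1/2, N + 1/2] × [-ε, ε]` is `2πi`
times a partial sum of the series (`mb_rectInt`), and the formula follows by letting `N → ∞`.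

The limit needs decay of `h` in horizontal strips, which is obtained without asymptotics of `Γ`:
the functional equation `h(s + 1) = q^{s+1} s e^{-a} h(s)` shows that, far enough to the right or
to the left, `|h|` at least halves at each unit step outwards (`mb_halving`). This gives both the
absolute convergence of the two line integrals and the vanishing of the vertical sides.
-/

/-- `f(x) = Σ_{n≥0} q^{n(n-1)/2} x^n / n!`. -/
noncomputable def fqb (q : ℝ) (x : ℂ) : ℂ :=
  ∑' n : ℕ, (q : ℂ) ^ (n * (n - 1) / 2) * x ^ n / (Nat.factorial n : ℂ)

section

open Complex MeasureTheory Filter Topology Set Asymptotics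
open scoped Interval

/-! ### The functional differential equation -/

lemma fqb_term_norm_le {q : ℝ} (hq0 : 0 < q) (hq1 : q < 1) (n : ℕ) {x : ℂ} {R : ℝ}
    (hx : ‖x‖ ≤ R) :
    ‖(q : ℂ) ^ (n * (n - 1) / 2) * x ^ n / (Nat.factorial n : ℂ)‖ ≤ R ^ n / n.factorial := by
  rw [norm_div, norm_mul, norm_pow, norm_pow, Complex.norm_natCast, Complex.norm_real,
    Real.norm_of_nonneg hq0.le]
  gcongr
  calc q ^ (n * (n - 1) / 2) * ‖x‖ ^ n ≤ 1 * R ^ n := by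
        gcongr
        exact pow_le_one₀ hq0.le hq1.le
    _ = R ^ n := one_mul _

lemma fqb_summable {q : ℝ} (hq0 : 0 < q) (hq1 : q < 1) (x : ℂ) :
    Summable fun n : ℕ => (q : ℂ) ^ (n * (n - 1) / 2) * x ^ n / (Nat.factorial n : ℂ) :=
  Summable.of_norm_bounded (Real.summable_pow_div_factorial ‖x‖)
    fun n => fqb_term_norm_le hq0 hq1 n le_rfl

lemma fqb_differentiable {q : ℝ} (hq0 : 0 < q) (hq1 : q < 1) : Differentiable ℂ (fqb q) := by
  intro x
  have h := differentiableOn_tsum_of_summable_norm (U := Metric.ball (0 : ℂ) (‖x‖ + 1))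
    (F := fun (n : ℕ) (w : ℂ) => (q : ℂ) ^ (n * (n - 1) / 2) * w ^ n / (Nat.factorial n : ℂ))
    (Real.summable_pow_div_factorial (‖x‖ + 1)) (fun n => by fun_prop) Metric.isOpen_ball
    (fun n w hw => fqb_term_norm_le hq0 hq1 n (by simpa using (mem_ball_zero_iff.1 hw).le))
  exact h.differentiableAt (Metric.isOpen_ball.mem_nhds (by simp))

lemma triangle_succ (n : ℕ) : (n + 1) * (n + 1 - 1) / 2 = n * (n - 1) / 2 + n := by
  rw [Nat.triangle_succ]

lemma fqb_deriv {q : ℝ} (hq0 : 0 < q) (hq1 : q < 1) (x : ℂ) :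
    deriv (fqb q) x = fqb q ((q : ℂ) * x) := by
  have h := hasSum_deriv_of_summable_norm (U := Metric.ball (0 : ℂ) (‖x‖ + 1)) (z := x)
    (F := fun (n : ℕ) (w : ℂ) => (q : ℂ) ^ (n * (n - 1) / 2) * w ^ n / (Nat.factorial n : ℂ))
    (Real.summable_pow_div_factorial (‖x‖ + 1)) (fun n => by fun_prop) Metric.isOpen_ball
    (fun n w hw => fqb_term_norm_le hq0 hq1 n (by simpa using (mem_ball_zero_iff.1 hw).le))
    (by simp)
  -- The constant term drops out, and the derivative of the `(n+1)`-st term is the `n`-th term at `qx`.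
  rw [← hasSum_nat_add_iff' 1] at h
  simp only [Finset.sum_range_one] at h
  have h0 : deriv (fun w : ℂ => (q : ℂ) ^ (0 * (0 - 1) / 2) * w ^ 0 / (Nat.factorial 0 : ℂ)) x
      = 0 := by simp
  rw [h0, sub_zero] at h
  refine (h.unique ?_ : _)
  convert! (fqb_summable hq0 hq1 ((q : ℂ) * x)).hasSum using 1
  ext n
  rw [triangle_succ, deriv_div_const, deriv_const_mul _ (by fun_prop), deriv_pow_field]
  have : (n.factorial : ℂ) ≠ 0 := by exact_mod_cast n.factorial_ne_zero
  have : (n + 1 : ℂ) ≠ 0 := by exact_mod_cast n.succ_ne_zero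
  simp only [Nat.factorial_succ, Nat.add_sub_cancel, mul_pow]
  push_cast
  field_simp
  ring

lemma fqb_zero (q : ℝ) : fqb q 0 = 1 := by
  rw [fqb, tsum_eq_single 0]
  · simp
  · intro n hn
    simp [hn]

/-- Any entire solution of `g'(x) = g(qx)` has `g⁽ⁿ⁾(x) = q^{n(n-1)/2} g(qⁿ x)`, so its Taylor
coefficients at `0` are those of `fqb q`. -/
lemma fqb_unique {q : ℝ} {g : ℂ → ℂ} (hg : Differentiable ℂ g)
    (hd : ∀ x : ℂ, deriv g x = g ((q : ℂ) * x)) (h0 : g 0 = 1) : g = fqb q := by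
  have hit (n : ℕ) : iteratedDeriv n g
      = fun x => (q : ℂ) ^ (n * (n - 1) / 2) * g ((q : ℂ) ^ n * x) := by
    induction n with
    | zero => simp
    | succ n ih =>
      rw [iteratedDeriv_succ, ih]
      ext x
      rw [deriv_const_mul _ (by fun_prop), deriv_comp_mul_left, hd, triangle_succ, smul_eq_mul,
        pow_add, pow_succ' (q : ℂ) n]
      ring_nf
  ext x
  rw [← taylorSeries_eq_of_entire' 0 x hg, fqb]
  refine tsum_congr fun n => ?_
  rw [hit]
  simp [h0]
  ring

/-! ### Geometric decay of the integrand in strips -/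

lemma halving_iterate {u : ℝ → ℂ} {T : ℝ} (h : ∀ t ≥ T, ‖u (t + 1)‖ ≤ ‖u t‖ / 2) {t : ℝ}
    (ht : T ≤ t) (n : ℕ) : ‖u (t + n)‖ ≤ ‖u t‖ / 2 ^ n := by
  induction n with
  | zero => simp
  | succ n ih =>
    have h1 := h (t + n) (by have : (0 : ℝ) ≤ n := n.cast_nonneg
                             linarith)
    push_cast
    rw [← add_assoc, pow_succ, ← div_div]
    linarith

lemma isBigO_of_halving {u : ℝ → ℂ} (hu : Continuous u) {T : ℝ}
    (h : ∀ t ≥ T, ‖u (t + 1)‖ ≤ ‖u t‖ / 2) :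
    u =O[atTop] fun t : ℝ => Real.exp (-Real.log 2 * t) := by
  obtain ⟨M, hM⟩ := (isCompact_Icc (a := T) (b := T + 1)).exists_bound_of_continuousOn
    hu.continuousOn
  have hM0 : 0 ≤ M := (norm_nonneg _).trans (hM T (by simp))
  refine IsBigO.of_bound (M * Real.exp (Real.log 2 * (T + 1))) ?_
  filter_upwards [eventually_ge_atTop T] with t ht
  have hfl := Nat.floor_le (sub_nonneg.2 ht)
  have hlt := Nat.lt_floor_add_one (t - T)
  set n := ⌊t - T⌋₊
  have h1 := halving_iterate h (t := t - n) (by linarith) n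
  rw [sub_add_cancel] at h1
  have h2 := hM (t - n) ⟨by linarith, by linarith⟩
  have hl : 0 < Real.log 2 := Real.log_pos one_lt_two
  have h3 : ((2 : ℝ) ^ n)⁻¹ = Real.exp (-Real.log 2 * n) := by
    rw [neg_mul, Real.exp_neg, mul_comm, Real.exp_nat_mul, Real.exp_log two_pos]
  rw [Real.norm_of_nonneg (Real.exp_pos _).le, mul_assoc, ← Real.exp_add]
  calc ‖u t‖ ≤ ‖u (t - n)‖ / 2 ^ n := h1
    _ ≤ M * ((2 : ℝ) ^ n)⁻¹ := by rw [div_eq_mul_inv]; gcongr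
    _ ≤ _ := by
      rw [h3]
      gcongr
      nlinarith

/-- A continuous function on the line whose size at least halves under every unit step outwards,
far enough from the origin, decays exponentially and hence is integrable. -/
lemma integrable_of_halving {u : ℝ → ℂ} (hu : Continuous u) {T : ℝ}
    (hR : ∀ t ≥ T, ‖u (t + 1)‖ ≤ ‖u t‖ / 2) (hL : ∀ t ≤ -T, ‖u (t - 1)‖ ≤ ‖u t‖ / 2) :
    Integrable u := by
  have hl : 0 < Real.log 2 := Real.log_pos one_lt_two
  have h1 := isBigO_of_halving hu hR
  have h2 : (fun t => u (-t)) =O[atTop] fun t : ℝ => Real.exp (-Real.log 2 * t) := by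
    refine isBigO_of_halving (T := T) (by fun_prop) fun t ht => ?_
    have := hL (-t) (by linarith)
    rwa [show -(t + 1) = -t - 1 by ring]
  have h3 : u =O[atBot] fun t : ℝ => Real.exp (Real.log 2 * t) := by
    have := h2.comp_tendsto tendsto_neg_atBot_atTop
    simpa [Function.comp_def] using this
  exact hu.locallyIntegrable.integrable_of_isBigO_atBot_atTop h3
    ⟨Iic 0, Iic_mem_atBot 0, integrableOn_exp_mul_Iic hl 0⟩ h1
    ⟨Ioi 0, Ioi_mem_atTop 0, exp_neg_integrableOn_Ioi 0 hl⟩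

/-- The Mellin–Barnes integrand `e^{c s(s+1)/2} Γ(s) e^{-s a}`; with `c = log q` and
`a = Log x - π i` it is `q^{s(s+1)/2} Γ(s) (-x)^{-s}`. -/
noncomputable def mb (c : ℝ) (a s : ℂ) : ℂ :=
  Complex.exp (s * (s + 1) / 2 * (c : ℂ)) * Complex.Gamma s * Complex.exp (-s * a)

lemma mb_add_one (c : ℝ) (a : ℂ) {s : ℂ} (hs : s ≠ 0) :
    mb c a (s + 1) = Complex.exp ((s + 1) * c) * s * Complex.exp (-a) * mb c a s := by
  have e1 : Complex.exp ((s + 1) * (s + 1 + 1) / 2 * (c : ℂ))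
      = Complex.exp (s * (s + 1) / 2 * (c : ℂ)) * Complex.exp ((s + 1) * c) := by
    rw [← Complex.exp_add]; ring_nf
  have e2 : Complex.exp (-(s + 1) * a) = Complex.exp (-s * a) * Complex.exp (-a) := by
    rw [← Complex.exp_add]; ring_nf
  rw [mb, mb, Complex.Gamma_add_one s hs, e1, e2]
  ring

lemma mb_differentiableAt (c : ℝ) (a : ℂ) {s : ℂ} (hs : ∀ m : ℕ, s ≠ -m) :
    DifferentiableAt ℂ (mb c a) s := by
  have := Complex.differentiableAt_Gamma s hs
  unfold mb
  fun_prop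

/-- The functional equation gives geometric decay of the integrand in horizontal strips, in both
directions: with `c = log q`, the factor `q^{s+1}` beats the linear growth of `s` on the right,
and `q^{-s}` is small on the left. -/
lemma mb_halving {c : ℝ} (hc : c < 0) (a : ℂ) (ε : ℝ) :
    ∃ T : ℝ, 1 ≤ T ∧
      (∀ s : ℂ, |s.im| ≤ ε → T ≤ s.re → ‖mb c a (s + 1)‖ ≤ ‖mb c a s‖ / 2) ∧
      (∀ s : ℂ, |s.im| ≤ ε → s.re ≤ -T → ‖mb c a (s - 1)‖ ≤ ‖mb c a s‖ / 2) := by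
  have l1 : Tendsto (fun t : ℝ => Real.exp (c * (t + 1)) * (t + ε) * Real.exp (-a.re)) atTop
      (𝓝 0) := by
    have h1 : Tendsto (fun t : ℝ => t ^ 1 * Real.exp (-(-c) * t)) atTop (𝓝 0) := by
      have := tendsto_rpow_mul_exp_neg_mul_atTop_nhds_zero 1 (-c) (by linarith)
      simpa using this
    have h0 : Tendsto (fun t : ℝ => Real.exp (-(-c) * t)) atTop (𝓝 0) := by
      have := tendsto_rpow_mul_exp_neg_mul_atTop_nhds_zero 0 (-c) (by linarith)
      simpa using this
    have := ((h1.add (h0.const_mul ε)).const_mul (Real.exp c)).mul_const (Real.exp (-a.re))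
    simp only [mul_zero, add_zero, zero_mul] at this
    refine this.congr fun t => ?_
    rw [show c * (t + 1) = -(-c) * t + c by ring, Real.exp_add]
    ring
  have l2 : Tendsto (fun t : ℝ => Real.exp (c * t) * Real.exp a.re) atTop (𝓝 0) := by
    have := (Real.tendsto_exp_atBot.comp (tendsto_id.const_mul_atTop_of_neg hc)).mul_const
      (Real.exp a.re)
    simpa using this
  obtain ⟨T, hT⟩ := eventually_atTop.1 ((l1.eventually_le_const (half_pos one_pos)).and
    (l2.eventually_le_const (half_pos one_pos)))
  -- `T ≥ 1` keeps `s` away from `0` on the right and gives `|s - 1| ≥ 1` on the left.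
  refine ⟨max T 1, le_max_right _ _, fun s hs hr => ?_, fun s hs hr => ?_⟩
  · have hr1 : T ≤ s.re := (le_max_left _ _).trans hr
    have hr2 : 1 ≤ s.re := (le_max_right _ _).trans hr
    have hne : s ≠ 0 := by
      rintro rfl
      simp at hr2
      linarith
    have hn : ‖s‖ ≤ s.re + ε := by
      have := Complex.norm_le_abs_re_add_abs_im s
      rw [abs_of_nonneg (by linarith : 0 ≤ s.re)] at this
      linarith
    have := (hT s.re hr1).1
    rw [mb_add_one c a hne, norm_mul, norm_mul, norm_mul, Complex.norm_exp, Complex.norm_exp,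
      show ((s + 1) * (c : ℂ)).re = c * (s.re + 1) by simp; ring, Complex.neg_re]
    calc _ ≤ Real.exp (c * (s.re + 1)) * (s.re + ε) * Real.exp (-a.re) * ‖mb c a s‖ := by gcongr
      _ ≤ 1 / 2 * ‖mb c a s‖ := by gcongr
      _ = _ := by ring
  · have hr1 : T ≤ -s.re := (le_max_left _ _).trans (by linarith)
    have hr2 : 1 ≤ -s.re := (le_max_right _ _).trans (by linarith)
    have hre : (s - 1).re = s.re - 1 := by simp
    have hn : 1 ≤ ‖s - 1‖ := by
      have := Complex.abs_re_le_norm (s - 1)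
      rw [hre, abs_of_neg (by linarith)] at this
      linarith
    have hne : s - 1 ≠ 0 := by
      intro h
      rw [h] at hn
      norm_num at hn
    have key := mb_add_one c a hne
    rw [sub_add_cancel] at key
    have hk := (hT (-s.re) hr1).2
    have e0 : Real.exp (c * -s.re) * Real.exp a.re * (Real.exp (c * s.re) * Real.exp (-a.re)) = 1 := by
      rw [← Real.exp_add, ← Real.exp_add, ← Real.exp_add, ← Real.exp_zero]
      ring_nf
    have hN : ‖mb c a s‖ = Real.exp (c * s.re) * ‖s - 1‖ * Real.exp (-a.re) * ‖mb c a (s - 1)‖ := by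
      rw [key, norm_mul, norm_mul, norm_mul, Complex.norm_exp, Complex.norm_exp,
        show (s * (c : ℂ)).re = c * s.re by simp; ring, Complex.neg_re]
    calc ‖mb c a (s - 1)‖ ≤ ‖s - 1‖ * ‖mb c a (s - 1)‖ := le_mul_of_one_le_left (norm_nonneg _) hn
      _ = Real.exp (c * -s.re) * Real.exp a.re * ‖mb c a s‖ := by
        rw [hN]
        linear_combination (-‖s - 1‖ * ‖mb c a (s - 1)‖) * e0
      _ ≤ 1 / 2 * ‖mb c a s‖ := by gcongr
      _ = _ := by ring

/-! ### Integrals along the boundary of a rectangle -/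

/-- The counterclockwise integral of `f` along the boundary of `[a, b] × [-ε, ε]`. -/
noncomputable def rectInt (f : ℂ → ℂ) (ε a b : ℝ) : ℂ :=
  (∫ x in a..b, f (x + (-ε : ℝ) * I)) - (∫ x in a..b, f (x + ε * I)) +
    I * (∫ y in (-ε)..ε, f (b + y * I)) - I * (∫ y in (-ε)..ε, f (a + y * I))

lemma rectInt_eq_zero {f : ℂ → ℂ} {ε a b : ℝ}
    (hf : DifferentiableOn ℂ f ([[a, b]] ×ℂ [[-ε, ε]])) : rectInt f ε a b = 0 := by
  have := Complex.integral_boundary_rect_eq_zero_of_differentiableOn f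
    ⟨a, -ε⟩ ⟨b, ε⟩ hf
  simpa only [smul_eq_mul, rectInt] using this

lemma rectInt_add {f : ℂ → ℂ} {ε a b c : ℝ} (hm : Continuous fun x : ℝ => f (x + (-ε : ℝ) * I))
    (hp : Continuous fun x : ℝ => f (x + ε * I)) :
    rectInt f ε a b + rectInt f ε b c = rectInt f ε a c := by
  simp only [rectInt]
  rw [← intervalIntegral.integral_add_adjacent_intervals (hm.intervalIntegrable a b)
      (hm.intervalIntegrable b c),
    ← intervalIntegral.integral_add_adjacent_intervals (hp.intervalIntegrable a b)
      (hp.intervalIntegrable b c)]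
  ring

lemma integral_poisson {δ ε : ℝ} (hε : 0 < ε) :
    ∫ x in (-δ)..δ, ε / (x ^ 2 + ε ^ 2) = 2 * Real.arctan (δ / ε) := by
  have hd (x : ℝ) : HasDerivAt (fun x => Real.arctan (x / ε)) (ε / (x ^ 2 + ε ^ 2)) x := by
    convert! ((hasDerivAt_id x).div_const ε).arctan using 1
    have : x ^ 2 + ε ^ 2 ≠ 0 := by positivity
    simp only [id]
    field_simp
    ring
  rw [intervalIntegral.integral_eq_sub_of_hasDerivAt (fun x _ => hd x), neg_div, Real.arctan_neg]
  · ring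
  · refine Continuous.intervalIntegrable ?_ _ _
    exact continuous_const.div (by fun_prop) fun x => by positivity

/-- The four sides contribute `4 i arctan(δ/ε) + 4 i arctan(ε/δ) = 2πi`. -/
lemma rectInt_inv_zero {δ ε : ℝ} (hδ : 0 < δ) (hε : 0 < ε) :
    rectInt (fun s => s⁻¹) ε (-δ) δ = 2 * Real.pi * I := by
  have hne1 (x y : ℝ) (hy : y ≠ 0) : (x + y * I : ℂ) ≠ 0 := by
    intro h
    apply hy
    simpa using congrArg Complex.im h
  have hne2 (x y : ℝ) (hx : x ≠ 0) : (x + y * I : ℂ) ≠ 0 := by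
    intro h
    apply hx
    simpa using congrArg Complex.re h
  have hsq (x y : ℝ) (hy : 0 < y) : (x ^ 2 + y ^ 2 : ℂ) ≠ 0 := by
    have : x ^ 2 + y ^ 2 ≠ 0 := by positivity
    exact_mod_cast this
  have h1 : (∫ x : ℝ in (-δ)..δ, (x + (-ε : ℝ) * I : ℂ)⁻¹) -
      (∫ x : ℝ in (-δ)..δ, (x + ε * I : ℂ)⁻¹) = 2 * I * (2 * Real.arctan (δ / ε) : ℝ) := by
    rw [← integral_poisson hε, ← intervalIntegral.integral_ofReal,
      ← intervalIntegral.integral_const_mul, ← intervalIntegral.integral_sub]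
    · refine intervalIntegral.integral_congr fun x _ => ?_
      have a1 := hne1 x (-ε) (by linarith)
      have a2 := hne1 x ε hε.ne'
      have a3 := hsq x ε hε
      push_cast at a1 ⊢
      rw [neg_mul, ← sub_eq_add_neg] at a1 ⊢
      field_simp
      linear_combination (2 * ε ^ 3 * I) * I_sq
    all_goals
      refine Continuous.intervalIntegrable (Continuous.inv₀ (by fun_prop) fun x => ?_) _ _
    · exact hne1 x (-ε) (by linarith)
    · exact hne1 x ε hε.ne'
  have h2 : (∫ y : ℝ in (-ε)..ε, ((δ : ℝ) + y * I : ℂ)⁻¹) -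
      (∫ y : ℝ in (-ε)..ε, ((-δ : ℝ) + y * I : ℂ)⁻¹) = 2 * (2 * Real.arctan (ε / δ) : ℝ) := by
    rw [← integral_poisson hδ, ← intervalIntegral.integral_ofReal,
      ← intervalIntegral.integral_const_mul, ← intervalIntegral.integral_sub]
    · refine intervalIntegral.integral_congr fun x _ => ?_
      have a1 := hne2 (-δ) x (by linarith)
      have a2 := hne2 δ x hδ.ne'
      have a3 := hsq x δ hδ
      push_cast at a1 ⊢
      field_simp
      linear_combination (-2 * δ * x ^ 2) * I_sq
    all_goals
      refine Continuous.intervalIntegrable (Continuous.inv₀ (by fun_prop) fun x => ?_) _ _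
    · exact hne2 δ x hδ.ne'
    · exact hne2 (-δ) x (by linarith)
  have h3 : Real.arctan (ε / δ) = Real.pi / 2 - Real.arctan (δ / ε) := by
    rw [← Real.arctan_inv_of_pos (by positivity), inv_div]
  rw [h3] at h2
  unfold rectInt
  rw [h1, add_sub_assoc, ← mul_sub, h2]
  push_cast
  ring

lemma rectInt_inv {δ ε : ℝ} (hδ : 0 < δ) (hε : 0 < ε) (c : ℝ) :
    rectInt (fun s => (s - c)⁻¹) ε (c - δ) (c + δ) = 2 * Real.pi * I := by
  rw [← rectInt_inv_zero hδ hε]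
  have e (r : ℝ) : ∫ x : ℝ in (c - δ)..(c + δ), (x + r * I - c : ℂ)⁻¹
      = ∫ x : ℝ in (-δ)..δ, (x + r * I : ℂ)⁻¹ := by
    have := intervalIntegral.integral_comp_sub_right (a := c - δ) (b := c + δ)
      (fun x : ℝ => (x + r * I : ℂ)⁻¹) c
    rw [sub_sub_cancel_left, add_sub_cancel_left] at this
    rw [← this]
    congr 1
    ext x
    push_cast
    ring
  unfold rectInt
  rw [e, e]
  congr 3 <;>
  · congr 1
    ext y
    push_cast
    ring

/-- Residue theorem for a rectangle around one simple pole. The hypothesis describes `h` near the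
rectangle as `φ(s)/(s - c)` with `φ` holomorphic, so that `φ c` is the residue. -/
lemma rectInt_simple_pole {h φ : ℂ → ℂ} {δ ε c : ℝ} (hδ : 0 < δ) (hε : 0 < ε)
    (hφ : DifferentiableOn ℂ φ ([[c - δ, c + δ]] ×ℂ [[-ε, ε]]))
    (hh : ∀ s ∈ [[c - δ, c + δ]] ×ℂ [[-ε, ε]], s ≠ c → h s = φ s / (s - c)) :
    rectInt h ε (c - δ) (c + δ) = 2 * Real.pi * I * φ c := by
  have hnhds : [[c - δ, c + δ]] ×ℂ [[-ε, ε]] ∈ 𝓝 (c : ℂ) := by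
    rw [uIcc_of_le (by linarith), uIcc_of_le (by linarith)]
    refine Filter.inter_mem ?_ ?_
    · exact Complex.continuous_re.continuousAt.preimage_mem_nhds
        (Icc_mem_nhds (by simpa using hδ) (by simpa using hδ))
    · exact Complex.continuous_im.continuousAt.preimage_mem_nhds
        (Icc_mem_nhds (by simpa using hε) (by simpa using hε))
  have hd := (Complex.differentiableOn_dslope hnhds).2 hφ
  have h0 := rectInt_eq_zero hd
  have h1 := rectInt_inv hδ hε c
  -- Split off the pole: `h = dslope φ c + φ c / (s - c)`, where `dslope φ c` is holomorphic.
  have key (s : ℂ) (hs : s ∈ [[c - δ, c + δ]] ×ℂ [[-ε, ε]]) (hne : s ≠ c) :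
      h s = dslope φ c s + φ c * (s - c)⁻¹ := by
    have := sub_ne_zero.2 hne
    rw [hh s hs hne, dslope_of_ne _ hne, slope_def_field]
    field_simp
    ring
  have side {a b : ℝ} {γ : ℝ → ℂ} (hγ : Continuous γ)
      (hmem : ∀ x ∈ [[a, b]], γ x ∈ [[c - δ, c + δ]] ×ℂ [[-ε, ε]])
      (hne : ∀ x, γ x ≠ c) :
      ∫ x in a..b, h (γ x) = (∫ x in a..b, dslope φ c (γ x)) +
        φ c * ∫ x in a..b, (γ x - c)⁻¹ := by
    rw [← intervalIntegral.integral_const_mul, ← intervalIntegral.integral_add]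
    · exact intervalIntegral.integral_congr fun x hx => key _ (hmem x hx) (hne x)
    · exact (hd.continuousOn.comp hγ.continuousOn hmem).intervalIntegrable
    · exact ((hγ.sub continuous_const).inv₀ fun x => sub_ne_zero.2 (hne x)).const_mul _
        |>.intervalIntegrable _ _
  have hor (r : ℝ) (hr : r ∈ [[-ε, ε]]) (hr0 : r ≠ 0) := side (a := c - δ) (b := c + δ)
    (γ := fun x : ℝ => x + r * I) (by fun_prop)
    (fun x hx => by
      rw [Complex.mem_reProdIm]
      exact ⟨by simpa using hx, by simpa using hr⟩)
    (fun x he => hr0 (by simpa using congrArg Complex.im he))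
  have ver (r : ℝ) (hr : r ∈ [[c - δ, c + δ]]) (hr0 : r ≠ c) := side (a := -ε) (b := ε)
    (γ := fun y : ℝ => r + y * I) (by fun_prop)
    (fun y hy => by
      rw [Complex.mem_reProdIm]
      exact ⟨by simpa using hr, by simpa using hy⟩)
    (fun x he => hr0 (by simpa using congrArg Complex.re he))
  have H1 := hor (-ε) left_mem_uIcc (by linarith)
  have H2 := hor ε right_mem_uIcc hε.ne'
  have H3 := ver (c - δ) left_mem_uIcc (by linarith)
  have H4 := ver (c + δ) right_mem_uIcc (by linarith)
  rw [← h1]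
  unfold rectInt at h0 ⊢
  rw [H1, H2, H3, H4]
  linear_combination h0

/-! ### Residues and the limit of large rectangles -/

/-- Applied with `W n y` the integrand on the vertical side of the `n`-th rectangle. -/
lemma tendsto_integral_of_halving {W : ℕ → ℝ → ℂ} {ε : ℝ} {K : ℕ} (hε : 0 < ε)
    (hc : Continuous (W K))
    (hW : ∀ n ≥ K, ∀ y ∈ Icc (-ε) ε, ‖W (n + 1) y‖ ≤ ‖W n y‖ / 2) :
    Tendsto (fun n => ∫ y in (-ε)..ε, W n y) atTop (𝓝 0) := by
  obtain ⟨M, hM⟩ := (isCompact_Icc (a := -ε) (b := ε)).exists_bound_of_continuousOn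
    hc.continuousOn
  have hb (n : ℕ) : ∀ y ∈ Icc (-ε) ε, ‖W (n + K) y‖ ≤ M * (1 / 2) ^ n := by
    induction n with
    | zero => simpa using hM
    | succ n ih =>
      intro y hy
      have h1 := hW (n + K) (by omega) y hy
      rw [show n + 1 + K = n + K + 1 by ring, pow_succ]
      linarith [ih y hy]
  rw [← tendsto_add_atTop_iff_nat K]
  refine squeeze_zero_norm (a := fun n => M * (1 / 2) ^ n * |ε - -ε|) (fun n => ?_) ?_
  · refine intervalIntegral.norm_integral_le_of_norm_le_const fun y hy => hb n y ?_
    rw [uIoc_of_le (by linarith)] at hy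
    exact Ioc_subset_Icc_self hy
  · have := ((tendsto_pow_atTop_nhds_zero_of_lt_one (r := (1 / 2 : ℝ)) (by norm_num)
      (by norm_num)).const_mul M).mul_const |ε - -ε|
    simpa using this

lemma ne_neg_nat_of_im {s : ℂ} (hs : s.im ≠ 0) (m : ℕ) : s ≠ -m := by
  rintro rfl
  simp at hs

lemma mb_continuous_horizontal (c : ℝ) (a : ℂ) {r : ℝ} (hr : r ≠ 0) :
    Continuous fun t : ℝ => mb c a (t + r * I) := by
  refine continuous_iff_continuousAt.2 fun t => ?_
  exact (mb_differentiableAt c a (ne_neg_nat_of_im (by simpa using hr))).continuousAt.comp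
    (f := fun t : ℝ => (t + r * I : ℂ)) (by fun_prop)

lemma mb_continuous_vertical (c : ℝ) (a : ℂ) {r : ℝ} (hr : ∀ m : ℕ, r ≠ -m) :
    Continuous fun y : ℝ => mb c a (r + y * I) := by
  refine continuous_iff_continuousAt.2 fun y => ?_
  exact (mb_differentiableAt c a fun m h => hr m
      (by simpa using congrArg Complex.re h)).continuousAt.comp
    (f := fun y : ℝ => (r + y * I : ℂ)) (by fun_prop)

lemma half_ne_neg_nat (n : ℤ) (m : ℕ) : (n + 1 / 2 : ℝ) ≠ -m := by
  intro h
  have : (2 * n + 1 + 2 * m : ℝ) = 0 := by linarith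
  have : 2 * n + 1 + 2 * m = 0 := by exact_mod_cast this
  omega

lemma mb_integrable {c : ℝ} (hc : c < 0) (a : ℂ) {r : ℝ} (hr : r ≠ 0) :
    Integrable fun t : ℝ => mb c a (t + r * I) := by
  obtain ⟨T, -, hR, hL⟩ := mb_halving hc a |r|
  refine integrable_of_halving (T := T) (mb_continuous_horizontal c a hr) (fun t ht => ?_)
    (fun t ht => ?_)
  · convert! hR (t + r * I) (by simp) (by simpa using ht) using 3
    push_cast
    ring
  · convert! hL (t + r * I) (by simp) (by simpa using ht) using 3
    push_cast
    ring

lemma mb_vertical_tendsto {c : ℝ} (hc : c < 0) (a : ℂ) {ε : ℝ} (hε : 0 < ε) :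
    Tendsto (fun n : ℕ => ∫ y in (-ε)..ε, mb c a ((n + 1 / 2 : ℝ) + y * I)) atTop (𝓝 0) ∧
    Tendsto (fun n : ℕ => ∫ y in (-ε)..ε, mb c a ((-n - 1 / 2 : ℝ) + y * I)) atTop (𝓝 0) := by
  obtain ⟨T, -, hR, hL⟩ := mb_halving hc a ε
  obtain ⟨K, hK⟩ := exists_nat_ge T
  constructor
  · refine tendsto_integral_of_halving (K := K) hε
      (mb_continuous_vertical c a fun m => by exact_mod_cast half_ne_neg_nat K m) ?_
    intro n hn y hy
    have hn' : (K : ℝ) ≤ n := by exact_mod_cast hn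
    convert! hR ((n + 1 / 2 : ℝ) + y * I) (by simpa using abs_le.2 hy)
      (by simp; linarith) using 3
    push_cast
    ring
  · refine tendsto_integral_of_halving (K := K) hε
      (mb_continuous_vertical c a fun m => ?_) ?_
    · have := half_ne_neg_nat (-K - 1) m
      push_cast at this
      convert! this using 1
      ring
    intro n hn y hy
    have hn' : (K : ℝ) ≤ n := by exact_mod_cast hn
    convert! hL ((-n - 1 / 2 : ℝ) + y * I) (by simpa using abs_le.2 hy)
      (by simp; linarith) using 3
    push_cast
    ring

/-- Near `-n` the integrand has a simple pole with residue the `n`-th term of `fqb q x`. The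
regular part is carried from `-n` to `-n - 1` by the functional equation `mb_add_one`. -/
lemma mb_simple_pole {q : ℝ} (hq0 : 0 < q) {a x : ℂ} (ha : Complex.exp a = -x) (n : ℕ) :
    ∃ φ : ℂ → ℂ, DifferentiableOn ℂ φ {s | |s.re + n| < 1} ∧
      φ (-n) = (q : ℂ) ^ (n * (n - 1) / 2) * x ^ n / (Nat.factorial n : ℂ) ∧
      ∀ s : ℂ, |s.re + n| < 1 → s ≠ -n → mb (Real.log q) a s = φ s / (s + n) := by
  set c := Real.log q with hc
  induction n with
  | zero =>
    refine ⟨fun s => Complex.exp (s * (s + 1) / 2 * (c : ℂ)) * Complex.Gamma (s + 1) *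
      Complex.exp (-s * a), fun s hs => ?_, ?_, fun s hs hne => ?_⟩
    · have h1 : ∀ m : ℕ, s + 1 ≠ -m := by
        intro m hm
        have h2 := congrArg Complex.re hm
        have h3 : |s.re + (0 : ℕ)| < 1 := hs
        have h4 : (0 : ℝ) ≤ m := m.cast_nonneg
        simp at h2 h3
        have := (abs_lt.1 h3).1
        linarith
      have h2 : DifferentiableAt ℂ (fun s => Complex.Gamma (s + 1)) s :=
        (Complex.differentiableAt_Gamma _ h1).comp s (by fun_prop)
      exact DifferentiableAt.differentiableWithinAt (by fun_prop)
    · simp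
    · have h0 : s ≠ 0 := by simpa using hne
      beta_reduce
      rw [Complex.Gamma_add_one s h0, mb]
      simp only [Nat.cast_zero, add_zero]
      field_simp
  | succ n ih =>
    obtain ⟨φ, hd, hr, he⟩ := ih
    have hs0 {s : ℂ} (hs : |s.re + (n + 1 : ℕ)| < 1) : s ≠ 0 := by
      rintro rfl
      have : (0 : ℝ) ≤ n := n.cast_nonneg
      have := (abs_lt.1 hs).2
      simp at this
      linarith
    have hs1 {s : ℂ} (hs : |s.re + (n + 1 : ℕ)| < 1) : |(s + 1).re + n| < 1 := by
      convert! hs using 2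
      simp
      ring
    refine ⟨fun s => φ (s + 1) * Complex.exp a * Complex.exp (-((s + 1) * c)) / s,
      ?_, ?_, fun s hs hne => ?_⟩
    · refine DifferentiableOn.div ?_ (by fun_prop) fun s hs => hs0 hs
      have : DifferentiableOn ℂ (fun s => φ (s + 1)) {s | |s.re + (n + 1 : ℕ)| < 1} :=
        hd.comp (by fun_prop) fun s hs => hs1 hs
      exact (this.mul (by fun_prop)).mul (by fun_prop)
    · have e1 : (-((n + 1 : ℕ) : ℂ) + 1) = -n := by push_cast; ring
      have e2 : Complex.exp (-(-(n : ℂ) * c)) = (q : ℂ) ^ n := by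
        rw [neg_mul, neg_neg, Complex.exp_nat_mul, ← Complex.ofReal_exp, hc, Real.exp_log hq0]
      simp only [e1, e2]
      rw [hr, ha, triangle_succ, Nat.factorial_succ]
      have : (n.factorial : ℂ) ≠ 0 := by exact_mod_cast n.factorial_ne_zero
      have : (n + 1 : ℂ) ≠ 0 := by exact_mod_cast n.succ_ne_zero
      push_cast
      field_simp
      ring
    · have h0 := hs0 hs
      have hne' : s + 1 ≠ -n := by
        intro h
        apply hne
        push_cast
        linear_combination h
      have hne2 : s + 1 + n ≠ 0 := fun h => hne' (by linear_combination h)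
      have hne3 : s + (n + 1) ≠ 0 := fun h => hne2 (by linear_combination h)
      have h1 := he (s + 1) (hs1 hs) hne'
      rw [mb_add_one c a h0] at h1
      have e3 : Complex.exp (-((s + 1) * c)) * Complex.exp ((s + 1) * c) = 1 := by
        rw [← Complex.exp_add]; simp
      have e4 : Complex.exp a * Complex.exp (-a) = 1 := by
        rw [← Complex.exp_add]; simp
      rw [eq_div_iff hne2] at h1
      push_cast
      rw [eq_div_iff hne3, eq_div_iff h0, ← h1]
      generalize Complex.exp (-((s + 1) * c)) = A at *
      generalize Complex.exp ((s + 1) * c) = B at *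
      generalize Complex.exp a = C at *
      generalize Complex.exp (-a) = D at *
      linear_combination (-s * mb c a s * (s + 1 + n)) * e3 -
        (s * mb c a s * (s + 1 + n) * A * B) * e4

/-- The rectangle is cut at half-integer abscissae: the box around `-n` contributes its residue and
the boxes to the right of `1/2` contribute nothing. -/
lemma mb_rectInt {q : ℝ} (hq0 : 0 < q) {a x : ℂ} (ha : Complex.exp a = -x) {ε : ℝ}
    (hε : 0 < ε) (N : ℕ) :
    rectInt (mb (Real.log q) a) ε (-N - 1 / 2) (N + 1 / 2) = 2 * Real.pi * I *
      ∑ n ∈ Finset.range (N + 1),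
        (q : ℂ) ^ (n * (n - 1) / 2) * x ^ n / (Nat.factorial n : ℂ) := by
  have hadd (u v w : ℝ) := rectInt_add (a := u) (b := v) (c := w)
    (mb_continuous_horizontal (Real.log q) a (r := -ε) (by linarith))
    (mb_continuous_horizontal (Real.log q) a (r := ε) hε.ne')
  have hbox (n : ℕ) : rectInt (mb (Real.log q) a) ε (-n - 1 / 2) (-n + 1 / 2) =
      2 * Real.pi * I * ((q : ℂ) ^ (n * (n - 1) / 2) * x ^ n / (Nat.factorial n : ℂ)) := by
    obtain ⟨φ, hd, hr, he⟩ := mb_simple_pole hq0 ha n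
    have hsub {s : ℂ} (hs : s ∈ [[(-n - 1 / 2 : ℝ), -n + 1 / 2]] ×ℂ [[-ε, ε]]) :
        |s.re + n| < 1 := by
      have := (Complex.mem_reProdIm.1 hs).1
      rw [uIcc_of_le (by linarith)] at this
      rw [abs_lt]
      constructor <;> linarith [this.1, this.2]
    have := rectInt_simple_pole (h := mb (Real.log q) a) (φ := φ) (c := -n) (δ := 1 / 2)
      (by norm_num) hε (hd.mono fun s hs => hsub hs)
      (fun s hs hne => by simpa using he s (hsub hs) (by simpa using hne))
    rw [this, ← hr]
    push_cast
    rfl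
  have hright (n : ℕ) : rectInt (mb (Real.log q) a) ε (n + 1 / 2) ((n + 1 : ℕ) + 1 / 2) = 0 := by
    refine rectInt_eq_zero fun s hs => (mb_differentiableAt _ a ?_).differentiableWithinAt
    have h := (Complex.mem_reProdIm.1 hs).1
    rw [uIcc_of_le (by push_cast; linarith)] at h
    rintro m rfl
    have h1 := h.1
    have h2 : (0 : ℝ) ≤ n := n.cast_nonneg
    have h3 : (0 : ℝ) ≤ m := m.cast_nonneg
    simp at h1
    linarith
  induction N with
  | zero => simpa using hbox 0
  | succ N ih =>
    rw [Finset.sum_range_succ, mul_add, ← ih, ← hbox, ← hadd _ (N + 1 / 2) _, hright,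
      ← hadd _ (-N - 1 / 2) _]
    push_cast
    ring_nf

lemma fqb_eq_integral {q : ℝ} (hq0 : 0 < q) (hq1 : q < 1) {a x : ℂ}
    (ha : Complex.exp a = -x) {ε : ℝ} (hε : 0 < ε) :
    fqb q x = (2 * Real.pi * I)⁻¹ * ((∫ t : ℝ, mb (Real.log q) a (t + (-ε : ℝ) * I)) -
      ∫ t : ℝ, mb (Real.log q) a (t + ε * I)) := by
  have hc : Real.log q < 0 := Real.log_neg hq0 hq1
  obtain ⟨v1, v2⟩ := mb_vertical_tendsto hc a hε
  have hb : Tendsto (fun N : ℕ => (N + 1 / 2 : ℝ)) atTop atTop :=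
    tendsto_atTop_add_const_right _ _ tendsto_natCast_atTop_atTop
  have ha' : Tendsto (fun N : ℕ => (-N - 1 / 2 : ℝ)) atTop atBot := by
    refine (tendsto_neg_atTop_atBot.comp hb).congr fun N => ?_
    simp only [Function.comp]
    ring
  have i1 := intervalIntegral_tendsto_integral
    (mb_integrable hc a (r := -ε) (by linarith)) ha' hb
  have i2 := intervalIntegral_tendsto_integral (mb_integrable hc a hε.ne') ha' hb
  have L := ((i1.sub i2).add (v1.const_mul I)).sub (v2.const_mul I)
  have S := ((fqb_summable hq0 hq1 x).hasSum.tendsto_sum_nat.comp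
    (tendsto_add_atTop_nat 1)).const_mul (2 * Real.pi * I : ℂ)
  have := tendsto_nhds_unique L (S.congr fun N => (mb_rectInt hq0 ha hε N).symm)
  rw [mul_zero, add_zero, sub_zero] at this
  rw [this, inv_mul_cancel_left₀ Complex.two_pi_I_ne_zero, fqb]

end

/-- `f` is the unique entire solution of `y'(x) = y(qx)`, `y(0) = 1`, and for
`x ∉ (-∞,0]` it equals `g_-(x) - g(x)`, a difference of two Mellin–Barnes type integrals. -/
theorem stmt18 (q : ℝ) (hq0 : 0 < q) (hq1 : q < 1) :
    (Differentiable ℂ (fqb q) ∧ (∀ x : ℂ, deriv (fqb q) x = fqb q ((q : ℂ) * x)) ∧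
      fqb q 0 = 1) ∧
    (∀ g : ℂ → ℂ, Differentiable ℂ g → (∀ x : ℂ, deriv g x = g ((q : ℂ) * x)) → g 0 = 1 →
      g = fqb q) ∧
    (∀ x ∈ Complex.slitPlane, ∀ ε : ℝ, 0 < ε →
      MeasureTheory.Integrable (fun t : ℝ =>
        Complex.exp (((t : ℂ) - Complex.I * ε) * ((t : ℂ) - Complex.I * ε + 1) / 2 *
            (Real.log q : ℂ)) *
          Complex.Gamma ((t : ℂ) - Complex.I * ε) *
          Complex.exp (-((t : ℂ) - Complex.I * ε) *
            (Complex.log x - (Real.pi : ℂ) * Complex.I))) ∧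
      MeasureTheory.Integrable (fun t : ℝ =>
        Complex.exp (((t : ℂ) + Complex.I * ε) * ((t : ℂ) + Complex.I * ε + 1) / 2 *
            (Real.log q : ℂ)) *
          Complex.Gamma ((t : ℂ) + Complex.I * ε) *
          Complex.exp (-((t : ℂ) + Complex.I * ε) *
            (Complex.log x - (Real.pi : ℂ) * Complex.I))) ∧
      fqb q x =
        (2 * (Real.pi : ℂ) * Complex.I)⁻¹ *
          ((∫ t : ℝ,
              Complex.exp (((t : ℂ) - Complex.I * ε) * ((t : ℂ) - Complex.I * ε + 1) / 2 *
                  (Real.log q : ℂ)) *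
                Complex.Gamma ((t : ℂ) - Complex.I * ε) *
                Complex.exp (-((t : ℂ) - Complex.I * ε) *
                  (Complex.log x - (Real.pi : ℂ) * Complex.I))) -
            ∫ t : ℝ,
              Complex.exp (((t : ℂ) + Complex.I * ε) * ((t : ℂ) + Complex.I * ε + 1) / 2 *
                  (Real.log q : ℂ)) *
                Complex.Gamma ((t : ℂ) + Complex.I * ε) *
                Complex.exp (-((t : ℂ) + Complex.I * ε) *
                  (Complex.log x - (Real.pi : ℂ) * Complex.I)))) := by
  refine ⟨⟨fqb_differentiable hq0 hq1, fqb_deriv hq0 hq1, fqb_zero q⟩,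
    fun g hg hd h0 => fqb_unique hg hd h0, fun x hx ε hε => ?_⟩
  have ha : Complex.exp (Complex.log x - (Real.pi : ℂ) * Complex.I) = -x := by
    rw [Complex.exp_sub, Complex.exp_log (Complex.slitPlane_ne_zero hx), Complex.exp_pi_mul_I]
    rw [div_neg, div_one]
  have hc : Real.log q < 0 := Real.log_neg hq0 hq1
  have e1 (t : ℝ) : (t : ℂ) - Complex.I * ε = t + (-ε : ℝ) * Complex.I := by
    push_cast
    ring
  have e2 (t : ℝ) : (t : ℂ) + Complex.I * ε = t + ε * Complex.I := by ring
  simp only [e1, e2]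
  exact ⟨mb_integrable hc _ (r := -ε) (by linarith), mb_integrable hc _ hε.ne',
    fqb_eq_integral hq0 hq1 ha hε⟩
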